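/- Let L be a residuated lattice. Then ⋂ {O(P) : P ∈ Spec(L)} = {1}, where O(P) = {x ∈ L : a ∨ x = 1 for some a ∈ L − P}. -/

import Mathlib

/-- A residuated lattice: a bounded lattice with a commutative monoid
operation `mul` whose identity is the top element, and a residuum `himp`
satisfying `mul x y ≤ z ↔ x ≤ himp y z`. Here `⊤` plays the role of `1`
and `⊥` the role of `0`. -/
class ResiduatedLattice (L : Type*) extends Lattice L, BoundedOrder L where
  mul : L → L → L
  himp : L → L → L
  mul_comm : ∀ x y : L, mul x y = mul y x
  mul_assoc : ∀ x y z : L, mul (mul x y) z = mul x (mul y z)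
  mul_top : ∀ x : L, mul x ⊤ = x
  residuation : ∀ x y z : L, mul x y ≤ z ↔ x ≤ himp y z

namespace ResiduatedLattice

variable {L : Type*} [ResiduatedLattice L]

/-- A filter of a residuated lattice: a nonempty, upward closed subset
closed under `mul`. -/
def IsFilter (F : Set L) : Prop :=
  F.Nonempty ∧ (∀ x y : L, x ∈ F → x ≤ y → y ∈ F) ∧
    ∀ x y : L, x ∈ F → y ∈ F → mul x y ∈ F

/-- A prime filter: a proper filter such that `x ⊔ y ∈ P` implies
`x ∈ P` or `y ∈ P`. -/
def IsPrimeFilter (P : Set L) : Prop :=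
  IsFilter P ∧ P ≠ Set.univ ∧ ∀ x y : L, x ⊔ y ∈ P → x ∈ P ∨ y ∈ P

/-- `filterGen X` is the smallest filter containing `X`. -/
def filterGen (X : Set L) : Set L := ⋂₀ {F : Set L | IsFilter F ∧ X ⊆ F}

/-- The prime spectrum: the set of all prime filters. -/
def Spectrum (L : Type*) [ResiduatedLattice L] := {P : Set L // IsPrimeFilter P}

/-- `D X = {P ∈ Spec L | X ⊄ P}`. -/
def D (X : Set L) : Set (Spectrum L) := {P : Spectrum L | ¬ X ⊆ P.1}

/-- `O P = {x | a ⊔ x = 1 for some a ∉ P}`. -/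
def O (P : Set L) : Set L := {x : L | ∃ a ∉ P, a ⊔ x = ⊤}

/-- The congruence relation associated to a filter `F`:
`x ≡_F y` iff `(x → y) ⊗ (y → x) ∈ F`. -/
def rel (F : Set L) (x y : L) : Prop := mul (himp x y) (himp y x) ∈ F

end ResiduatedLattice

namespace ResiduatedLattice

/-! If `x ∈ O P` with `P` prime, then `a ⊔ x = ⊤ ∈ P` for some `a ∉ P`, so `x ∈ P`. Hence `⋂ O(P)`
is contained in the intersection of all prime filters, which is `{⊤}` by the prime filter theorem.

For that theorem, let `P` be a filter maximal among those avoiding a join-closed set `S`, and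
suppose `x ⊔ y ∈ P` with `x, y ∉ P`. The filter `{z | z ⊔ y ∈ P}` contains `P` and `x`, so it
contains some `s ∈ S`; now `y ⊔ s ∈ P`, and the same argument gives `t ∈ S` with `t ⊔ s ∈ P ∩ S`. -/

section Mul

variable {L : Type*} [ResiduatedLattice L]

theorem gc_mul_himp (y : L) : GaloisConnection (mul · y) (himp y) :=
  fun x z => residuation x y z

theorem sup_mul (x y z : L) : mul (x ⊔ y) z = mul x z ⊔ mul y z :=
  (gc_mul_himp z).l_sup

theorem mul_sup (x y z : L) : mul x (y ⊔ z) = mul x y ⊔ mul x z := by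
  simp only [mul_comm x, sup_mul]

theorem mul_le_right (x y : L) : mul x y ≤ y :=
  calc
    mul x y ≤ mul ⊤ y := (gc_mul_himp y).monotone_l le_top
    _ = y := by rw [mul_comm, mul_top]

theorem mul_le_left (x y : L) : mul x y ≤ x :=
  mul_comm x y ▸ mul_le_right y x

theorem sup_mul_sup_le (x y a : L) : mul (x ⊔ a) (y ⊔ a) ≤ mul x y ⊔ a :=
  calc
    mul (x ⊔ a) (y ⊔ a) = mul x y ⊔ mul x a ⊔ mul a (y ⊔ a) := by rw [sup_mul, mul_sup x]
    _ ≤ mul x y ⊔ a :=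
      sup_le (sup_le_sup_left (mul_le_right x a) _) (le_sup_of_le_right (mul_le_left a _))

end Mul

section Filter

variable {L : Type*} [ResiduatedLattice L] {F P S : Set L} {x y : L}

theorem IsFilter.mem_of_le (hF : IsFilter F) (hx : x ∈ F) (hxy : x ≤ y) : y ∈ F :=
  hF.2.1 x y hx hxy

theorem IsFilter.mul_mem (hF : IsFilter F) (hx : x ∈ F) (hy : y ∈ F) : mul x y ∈ F :=
  hF.2.2 x y hx hy

theorem IsFilter.top_mem (hF : IsFilter F) : ⊤ ∈ F :=
  let ⟨_, hx⟩ := hF.1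
  hF.mem_of_le hx le_top

theorem isFilter_singleton_top : IsFilter ({⊤} : Set L) := by
  refine ⟨Set.singleton_nonempty ⊤, ?_, ?_⟩
  · rintro _ y rfl hy
    exact top_le_iff.1 hy
  · rintro _ _ rfl rfl
    exact mul_top ⊤

theorem isFilter_sUnion_of_directedOn {c : Set (Set L)} (hne : c.Nonempty)
    (hdir : DirectedOn (· ⊆ ·) c) (hc : ∀ F ∈ c, IsFilter F) : IsFilter (⋃₀ c) := by
  refine ⟨?_, ?_, ?_⟩
  · obtain ⟨F, hF⟩ := hne
    exact ⟨⊤, F, hF, (hc F hF).top_mem⟩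
  · rintro x y ⟨F, hF, hx⟩ hxy
    exact ⟨F, hF, (hc F hF).mem_of_le hx hxy⟩
  · rintro x y ⟨F, hF, hx⟩ ⟨G, hG, hy⟩
    obtain ⟨H, hH, hFH, hGH⟩ := hdir F hF G hG
    exact ⟨H, hH, (hc H hH).mul_mem (hFH hx) (hGH hy)⟩

/-- The coannihilator `(F : a)` of an element `a` relative to a set `F`, used to enlarge a
filter `F`. -/
def coannihilator (F : Set L) (a : L) : Set L := {z : L | z ⊔ a ∈ F}

theorem IsFilter.subset_coannihilator (hF : IsFilter F) (a : L) : F ⊆ coannihilator F a :=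
  fun _ hz => hF.mem_of_le hz le_sup_left

theorem IsFilter.coannihilator (hF : IsFilter F) (a : L) : IsFilter (coannihilator F a) :=
  ⟨⟨⊤, hF.subset_coannihilator a hF.top_mem⟩,
    fun _ _ hx hxy => hF.mem_of_le hx (sup_le_sup_right hxy a),
    fun x y hx hy => hF.mem_of_le (hF.mul_mem hx hy) (sup_mul_sup_le x y a)⟩

theorem exists_sup_mem_of_maximal_disjoint
    (hP : Maximal (fun F => IsFilter F ∧ Disjoint F S) P) (hxy : x ⊔ y ∈ P) (hx : x ∉ P) :
    ∃ s ∈ S, s ⊔ y ∈ P := by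
  have hfilter : IsFilter P := hP.prop.1
  by_contra! hS
  have hdisj : Disjoint (coannihilator P y) S := Set.disjoint_right.2 hS
  exact hx (hP.le_of_ge ⟨hfilter.coannihilator y, hdisj⟩ (hfilter.subset_coannihilator y) hxy)

theorem isPrimeFilter_of_maximal_disjoint (hS : SupClosed S) (hne : S.Nonempty)
    (hP : Maximal (fun F => IsFilter F ∧ Disjoint F S) P) : IsPrimeFilter P := by
  have hdisj : Disjoint P S := hP.prop.2
  refine ⟨hP.prop.1, ?_, fun x y hxy => ?_⟩
  · obtain ⟨s, hs⟩ := hne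
    exact (Set.ne_univ_iff_exists_notMem P).2 ⟨s, hdisj.notMem_of_mem_right hs⟩
  · by_contra! ⟨hx, hy⟩
    obtain ⟨s, hs, hsy⟩ := exists_sup_mem_of_maximal_disjoint hP hxy hx
    obtain ⟨t, ht, hts⟩ := exists_sup_mem_of_maximal_disjoint hP (sup_comm s y ▸ hsy) hy
    exact hdisj.notMem_of_mem_left hts (hS ht hs)

theorem IsFilter.exists_maximal_disjoint (hF : IsFilter F) (hFS : Disjoint F S) :
    ∃ P, F ⊆ P ∧ Maximal (fun G => IsFilter G ∧ Disjoint G S) P := by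
  refine zorn_subset_nonempty {G | IsFilter G ∧ Disjoint G S} (fun c hc hchain hne => ?_) F
    ⟨hF, hFS⟩
  have hunion : IsFilter (⋃₀ c) :=
    isFilter_sUnion_of_directedOn hne hchain.directedOn fun G hG => (hc hG).1
  have hdisj : Disjoint (⋃₀ c) S := Set.disjoint_sUnion_left.2 fun G hG => (hc hG).2
  exact ⟨⋃₀ c, ⟨hunion, hdisj⟩, fun _ => Set.subset_sUnion_of_mem⟩

theorem IsFilter.exists_isPrimeFilter_disjoint (hF : IsFilter F) (hS : SupClosed S)
    (hne : S.Nonempty) (hFS : Disjoint F S) : ∃ P, IsPrimeFilter P ∧ F ⊆ P ∧ Disjoint P S :=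
  let ⟨P, hFP, hP⟩ := hF.exists_maximal_disjoint hFS
  ⟨P, isPrimeFilter_of_maximal_disjoint hS hne hP, hFP, hP.prop.2⟩

theorem IsFilter.sInter_isPrimeFilter_superset (hF : IsFilter F) :
    ⋂₀ {P | IsPrimeFilter P ∧ F ⊆ P} = F := by
  refine Set.Subset.antisymm (fun x hx => ?_) (Set.subset_sInter fun P hP => hP.2)
  by_contra hxF
  obtain ⟨P, hP, hFP, hxP⟩ := hF.exists_isPrimeFilter_disjoint supClosed_singleton
    (Set.singleton_nonempty x) (Set.disjoint_singleton_right.2 hxF)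
  exact Set.disjoint_singleton_right.1 hxP (hx P ⟨hP, hFP⟩)

theorem IsPrimeFilter.O_subset (hP : IsPrimeFilter P) : O P ⊆ P := by
  rintro x ⟨a, ha, hax⟩
  have hmem : a ⊔ x ∈ P := hax ▸ hP.1.top_mem
  exact (hP.2.2 a x hmem).resolve_left ha

theorem top_mem_O_iff : ⊤ ∈ O P ↔ P ≠ Set.univ := by
  simp [O, Set.ne_univ_iff_exists_notMem]

end Filter

/-- `⋂ {O(P) : P ∈ Spec(L)} = {1}`. -/
theorem sInter_O_primeFilters (L : Type*) [ResiduatedLattice L] :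
    ⋂₀ {G : Set L | ∃ P : Set L, IsPrimeFilter P ∧ G = O P} = ({⊤} : Set L) := by
  refine Set.Subset.antisymm (fun x hx => ?_) (Set.singleton_subset_iff.2 ?_)
  · rw [← isFilter_singleton_top.sInter_isPrimeFilter_superset]
    rintro P ⟨hP, -⟩
    exact hP.O_subset (hx (O P) ⟨P, hP, rfl⟩)
  · rintro _ ⟨P, hP, rfl⟩
    exact top_mem_O_iff.2 hP.2.1

end ResiduatedLattice
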